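/- Let σ : Σ⁺ → Σ⁺ be a topologically mixing one-sided subshift of finite type with finite alphabet, G a countable group, and T_ψ a transitive group extension determined by a map ψ depending on two coordinates. Let f : Σ⁺ → ℝ be Hölder continuous. If G is amenable, then P_Gur(f, T_ψ) = P_Gur(f, T_{ψ^ab}). -/

import Mathlib

/-!
STATEMENT 4: For a topologically mixing one-sided subshift of finite type with finite
alphabet, a countable group `G` and a transitive group extension `T_ψ` (with `ψ` depending
on two coordinates), and a Hölder continuous `f`, if `G` is amenable then the Gurevič pressures satisfy
`P_Gur(f,T_ψ) = P_Gur(f,T_{ψ^ab})`.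
-/

open Filter

namespace DS

/-- The one-sided shift space determined by a 0-1 transition matrix `A` on the alphabet `S`. -/
def Space {S : Type*} (A : S → S → Bool) : Type _ :=
  {x : ℕ → S // ∀ n : ℕ, A (x n) (x (n + 1)) = true}

variable {S : Type*} {A : S → S → Bool}

/-- The (one-sided) shift map. -/
def shift (x : Space A) : Space A :=
  ⟨fun n => x.1 (n + 1), fun n => x.2 (n + 1)⟩

/-- Aperiodicity of the transition matrix: some power of `A` has all entries positive,
i.e. there is `N ≥ 1` such that any two symbols are joined by an admissible word of
length `N`.  (For subshifts of finite type this is topological mixing.) -/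
def Aperiodic (A : S → S → Bool) : Prop :=
  ∃ N : ℕ, 0 < N ∧ ∀ i j : S, ∃ w : ℕ → S,
    w 0 = i ∧ w N = j ∧ ∀ k < N, A (w k) (w (k + 1)) = true

/-- `ψ` depends only on the first two coordinates. -/
def TwoCoord {G : Type*} (ψ : Space A → G) : Prop :=
  ∀ x y : Space A, x.1 0 = y.1 0 → x.1 1 = y.1 1 → ψ x = ψ y

variable {G : Type*} [Group G]

/-- The cocycle `ψⁿ(x) = ψ(x) ψ(σx) ⋯ ψ(σ^{n-1}x)`. -/
def cocycle (ψ : Space A → G) : ℕ → Space A → G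
  | 0, _ => 1
  | n + 1, x => ψ x * cocycle ψ n (shift x)

/-- The group extension `T_ψ(x,g) = (σ x, g ψ(x))`. -/
def T (ψ : Space A → G) (p : Space A × G) : Space A × G :=
  (shift p.1, p.2 * ψ p.1)

/-- Topological transitivity of the group extension `T_ψ` (density of some orbit in the
product of the shift space, with its product topology over the discrete alphabet, and the
discrete group: the orbit enters every cylinder-times-group-element set). -/
def TransitiveExt (ψ : Space A → G) : Prop :=
  ∃ p : Space A × G, ∀ (m : ℕ) (y : Space A) (g : G), ∃ n : ℕ,
    (∀ j < m, ((T ψ)^[n] p).1.1 j = y.1 j) ∧ ((T ψ)^[n] p).2 = g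

/-- Gurevič entropy of the group extension: the exponential growth rate of the number of
periodic points `σⁿ x = x` with trivial cocycle `ψⁿ(x) = e`. -/
noncomputable def hGur (ψ : Space A → G) : ℝ :=
  Filter.atTop.limsup fun n : ℕ =>
    Real.log (Nat.card {x : Space A // shift^[n] x = x ∧ cocycle ψ n x = 1}) / n

/-- Amenability of `G`: existence of a Banach mean, i.e. a linear functional on the
bounded real-valued functions on `G` which is `G`-invariant and lies between `inf` and
`sup`. -/
def Amenable (G : Type*) [Group G] : Prop :=
  ∃ m : (G → ℝ) → ℝ,
    (∀ x y : G → ℝ, m (x + y) = m x + m y) ∧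
    (∀ (c : ℝ) (x : G → ℝ), m (c • x) = c * m x) ∧
    (∀ x : G → ℝ, Bornology.IsBounded (Set.range x) →
      (∀ g : G, m (fun h => x (h * g)) = m x) ∧
      sInf (Set.range x) ≤ m x ∧ m x ≤ sSup (Set.range x))

end DS

open DS

namespace DS

variable {S : Type*} {A : S → S → Bool} {G : Type*} [Group G]

/-- Birkhoff sum `fⁿ = Σ_{j<n} f ∘ σʲ`. -/
noncomputable def birk (f : Space A → ℝ) (n : ℕ) (x : Space A) : ℝ :=
  ∑ j ∈ Finset.range n, f (shift^[j] x)

/-- `f` is Hölder continuous with respect to the metric `d(x,y) = 2^{-inf{n : xₙ ≠ yₙ}}`: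
there are `α > 0` and `C ≥ 0` such that if `x` and `y` agree in the first `n` coordinates
then `|f(x) - f(y)| ≤ C 2^{-nα}`. -/
def HolderF (f : Space A → ℝ) : Prop :=
  ∃ α : ℝ, 0 < α ∧ ∃ C : ℝ, 0 ≤ C ∧ ∀ (n : ℕ) (x y : Space A),
    (∀ j < n, x.1 j = y.1 j) → |f x - f y| ≤ C * 2 ^ (-(n : ℝ) * α)

/-- Gurevič pressure of `f` (viewed as a function on `Σ⁺ × G` depending only on the first
coordinate) with respect to the group extension `T_ψ`:
`P_Gur(f,T_ψ) = limsup (1/n) log Σ_{σⁿx=x, ψⁿ(x)=e} e^{fⁿ(x)}`. -/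
noncomputable def PGur (ψ : Space A → G) (f : Space A → ℝ) : ℝ :=
  Filter.atTop.limsup fun n : ℕ =>
    Real.log (∑' x : {x : Space A // shift^[n] x = x ∧ cocycle ψ n x = 1},
      Real.exp (birk f n x.1)) / n

end DS

open DS

namespace DS

open scoped ENNReal

section Abstract

variable {G : Type*} [Group G]

/-- Single term consequence of quasi-supermultiplicativity. -/
lemma abs_single (u : ℕ → G → ℝ≥0∞) (D : ℝ≥0∞)
    (hmul : ∀ m n g, ∑' k, u m (g * k⁻¹) * u n k ≤ D * u (m + n) g) (m n : ℕ) (a b : G) :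
    u m a * u n b ≤ D * u (m + n) (a * b) := by
  refine le_trans ?_ (hmul m n (a * b))
  have := ENNReal.le_tsum (f := fun k => u m (a * b * k⁻¹) * u n k) b
  simpa using this

/-- The semigroup of lengths: period argument. -/
lemma abs_period (u : ℕ → G → ℝ≥0∞) (D : ℝ≥0∞)
    (hmul : ∀ m n g, ∑' k, u m (g * k⁻¹) * u n k ≤ D * u (m + n) g)
    (hpos : ∀ g, ∃ n, u n g ≠ 0) :
    ∃ N, ∀ n ≥ N, ∀ k, Abelianization.of k = 1 → u n k ≠ 0 → u n 1 ≠ 0 := by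
  have hE : ∀ m n a b, u m a ≠ 0 → u n b ≠ 0 → u (m + n) (a * b) ≠ 0 := by
    intro m n a b ha hb h0
    have := abs_single u D hmul m n a b
    rw [h0, mul_zero] at this
    exact (mul_ne_zero ha hb) (le_antisymm this zero_le)
  let M : AddSubmonoid ℕ :=
    { carrier := {n | n = 0 ∨ u n 1 ≠ 0}
      zero_mem' := Or.inl rfl
      add_mem' := by
        rintro a b (rfl | ha) (rfl | hb)
        · left; rfl
        · right; simpa using hb
        · right; simpa using ha
        · right; simpa using hE a b 1 1 ha hb }
  obtain ⟨N, hN⟩ := Nat.exists_mem_closure_of_ge (M : Set ℕ)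
  set p := Nat.setGcd (M : Set ℕ) with hp
  have hdiv : ∀ n, u n 1 ≠ 0 → ((n : ℕ) : ZMod p) = 0 := by
    intro n hn
    rw [ZMod.natCast_eq_zero_iff]
    exact Nat.setGcd_dvd_of_mem (Or.inr hn)
  choose l hl using hpos
  have huniq : ∀ n g, u n g ≠ 0 → (n : ZMod p) = (l g : ZMod p) := by
    intro n g hn
    have h1 := hdiv _ (by simpa using hE _ _ _ _ hn (hl g⁻¹))
    have h2 := hdiv _ (by simpa using hE _ _ _ _ (hl g) (hl g⁻¹))
    push_cast at h1 h2
    exact add_right_cancel (h1.trans h2.symm)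
  let χ : G →* Multiplicative (ZMod p) :=
    MonoidHom.mk' (fun g => Multiplicative.ofAdd (l g : ZMod p)) (by
      intro a b
      rw [← ofAdd_add]
      congr 1
      have := huniq _ _ (hE _ _ _ _ (hl a) (hl b))
      push_cast at this
      exact this.symm)
  refine ⟨N + 1, fun n hn k hk hu => ?_⟩
  have h1 : χ k = 1 := by
    rw [← Abelianization.lift_apply_of χ k, hk, map_one]
  have h2 : (l k : ZMod p) = 0 := h1
  have h3 : (n : ZMod p) = 0 := (huniq n k hu).trans h2
  rw [ZMod.natCast_eq_zero_iff] at h3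
  have h4 := hN n (by omega) h3
  rw [AddSubmonoid.closure_eq] at h4
  rcases h4 with h | h
  · omega
  · exact h

/-- Mean of a nonnegatively bounded family. -/
lemma mean_step (m : (G → ℝ) → ℝ)
    (hadd : ∀ x y : G → ℝ, m (x + y) = m x + m y)
    (hsmul : ∀ (c : ℝ) (x : G → ℝ), m (c • x) = c * m x)
    (hm : ∀ x : G → ℝ, Bornology.IsBounded (Set.range x) →
      (∀ g : G, m (fun h => x (h * g)) = m x) ∧
      sInf (Set.range x) ≤ m x ∧ m x ≤ sSup (Set.range x))
    (H : G → ℝ) (hH : ∀ g, 0 < H g)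
    (hHar : ∀ k, ∃ C, ∀ g, H (g * k) ≤ C * H g)
    (K : Finset G) (hK : ∀ k ∈ K, Abelianization.of k = 1) (U : G → ℝ) (hU : ∀ k, 0 ≤ U k)
    (c : ℝ) (hc : ∀ g, ∑ k ∈ K, H (g * k⁻¹) * U k ≤ c * H g) :
    ∑ k ∈ K, U k ≤ c := by
  let t : G → G → ℝ := fun k g => Real.log (H (g * k)) - Real.log (H g)
  have htb : ∀ k, Bornology.IsBounded (Set.range (t k)) := by
    intro k
    obtain ⟨C1, h1⟩ := hHar k
    obtain ⟨C2, h2⟩ := hHar k⁻¹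
    have up : ∀ k C g, H (g * k) ≤ C * H g → Real.log (H (g * k)) - Real.log (H g) ≤ Real.log C := by
      intro k C g h
      have hC : 0 < C := by
        by_contra hC
        have : C * H g ≤ 0 := mul_nonpos_of_nonpos_of_nonneg (not_lt.mp hC) (hH g).le
        linarith [hH (g * k)]
      have := Real.log_le_log (hH _) h
      rw [Real.log_mul hC.ne' (hH g).ne'] at this
      linarith
    refine (Metric.isBounded_Icc (-Real.log C2) (Real.log C1)).subset ?_
    rintro _ ⟨g, rfl⟩
    refine ⟨?_, up k C1 g (h1 g)⟩
    have := up k⁻¹ C2 (g * k) (h2 _)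
    simp only [mul_inv_cancel_right] at this
    simp only [t]
    linarith
  let φ : G →* Multiplicative ℝ :=
    MonoidHom.mk' (fun k => Multiplicative.ofAdd (m (t k))) (by
      intro a b
      rw [← ofAdd_add]
      congr 1
      have h1 := (hm (t b) (htb b)).1 a
      rw [← h1, ← hadd]
      congr 1
      funext g
      simp only [t, Pi.add_apply, mul_assoc]
      ring)
  have hφ : ∀ k, Abelianization.of k = 1 → m (t k) = 0 := by
    intro k hk
    have h1 : φ k = 1 := by
      rw [← Abelianization.lift_apply_of φ k, hk, map_one]
    exact h1
  have hsum : ∀ (s : Finset G) (x : G → G → ℝ), m (∑ k ∈ s, x k) = ∑ k ∈ s, m (x k) := by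
    classical
    intro s x
    induction s using Finset.induction_on with
    | empty => simpa using hsmul 0 0
    | insert a s ha ih => rw [Finset.sum_insert ha, Finset.sum_insert ha, hadd, ih]
  -- apply the mean to `∑ U k * t k⁻¹`
  let y : G → ℝ := ∑ k ∈ K, U k • t k⁻¹
  have hy0 : m y = 0 := by
    rw [hsum]
    refine Finset.sum_eq_zero fun k hk => ?_
    rw [hsmul, hφ k⁻¹ (by rw [map_inv, hK k hk, inv_one]), mul_zero]
  have hyle : ∀ g, y g ≤ c - ∑ k ∈ K, U k := by
    intro g
    have h1 : ∑ k ∈ K, U k * (1 + t k⁻¹ g) ≤ c := by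
      have h2 : ∑ k ∈ K, H (g * k⁻¹) / H g * U k ≤ c := by
        have := hc g
        rw [← div_le_iff₀ (hH g), Finset.sum_div] at this
        refine le_trans (le_of_eq ?_) this
        refine Finset.sum_congr rfl fun k _ => by ring
      refine le_trans (Finset.sum_le_sum fun k _ => ?_) h2
      rw [mul_comm]
      refine mul_le_mul_of_nonneg_right ?_ (hU k)
      have : H (g * k⁻¹) / H g = Real.exp (t k⁻¹ g) := by
        simp only [t]
        rw [Real.exp_sub, Real.exp_log (hH _), Real.exp_log (hH _)]
      rw [this, add_comm]
      exact Real.add_one_le_exp _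
    have h3 : y g = ∑ k ∈ K, U k * t k⁻¹ g := by
      simp [y, Finset.sum_apply]
    rw [h3]
    simp only [mul_add, mul_one, Finset.sum_add_distrib] at h1
    linarith
  have hyb : Bornology.IsBounded (Set.range y) := by
    choose R hR using fun k => (htb k).exists_norm_le
    refine (Metric.isBounded_Icc (-∑ k ∈ K, U k * R k⁻¹) (∑ k ∈ K, U k * R k⁻¹)).subset ?_
    rintro _ ⟨g, rfl⟩
    rw [Set.mem_Icc, ← abs_le (a := y g)]
    have h3 : y g = ∑ k ∈ K, U k * t k⁻¹ g := by
      simp [y, Finset.sum_apply]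
    rw [h3]
    refine (Finset.abs_sum_le_sum_abs _ _).trans (Finset.sum_le_sum fun k _ => ?_)
    rw [abs_mul, abs_of_nonneg (hU k)]
    exact mul_le_mul_of_nonneg_left (hR k⁻¹ _ ⟨g, rfl⟩) (hU k)
  have h5 := (hm y hyb).2.2
  rw [hy0] at h5
  have h6 : sSup (Set.range y) ≤ c - ∑ k ∈ K, U k := by
    apply csSup_le (Set.range_nonempty y)
    rintro _ ⟨g, rfl⟩
    exact hyle g
  linarith

/-- Main abstract estimate. -/
lemma abs_main (ham : Amenable G) (u : ℕ → G → ℝ≥0∞) (D : ℝ≥0∞) (hD : D ≠ ⊤)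
    (hmul : ∀ m n g, ∑' k, u m (g * k⁻¹) * u n k ≤ D * u (m + n) g)
    (hpos : ∀ g, ∃ n, u n g ≠ 0) (B q r : ℝ≥0∞) (hB : B ≠ ⊤) (hqr : q < r) (hr : r ≠ ⊤)
    (hq : ∀ n, u n 1 ≤ B * q ^ n) (n : ℕ) :
    ∑' k : {k : G // Abelianization.of k = 1}, u n k ≤ D * r ^ n := by
  have hr0 : r ≠ 0 := (lt_of_le_of_lt zero_le hqr).ne'
  have hqt : q ≠ ⊤ := hqr.ne_top
  have hbd : ∀ g, ∃ K : ℝ≥0∞, K ≠ ⊤ ∧ ∀ n, u n g ≤ K * q ^ n := by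
    intro g
    obtain ⟨m, hm⟩ := hpos g⁻¹
    refine ⟨D * (B * q ^ m) / u m g⁻¹, ?_, fun n => ?_⟩
    · exact ENNReal.div_ne_top (by finiteness) hm
    · have h1 := abs_single u D hmul n m g g⁻¹
      rw [mul_inv_cancel] at h1
      have h2 : u n g * u m g⁻¹ ≤ D * (B * q ^ (n + m)) := h1.trans (by gcongr; exact hq _)
      rw [← ENNReal.le_div_iff_mul_le (Or.inl hm) (Or.inr (by finiteness))] at h2
      refine h2.trans (le_of_eq ?_)
      rw [pow_add, div_eq_mul_inv, div_eq_mul_inv]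
      ring
  let h : G → ℝ≥0∞ := fun g => ∑' j, r⁻¹ ^ j * u j g
  have hfin : ∀ g, h g ≠ ⊤ := by
    intro g
    obtain ⟨K, hK, hKu⟩ := hbd g
    have h1 : h g ≤ ∑' j, K * (r⁻¹ * q) ^ j := by
      refine ENNReal.tsum_le_tsum fun j => ?_
      calc r⁻¹ ^ j * u j g ≤ r⁻¹ ^ j * (K * q ^ j) := by gcongr; exact hKu j
        _ = K * (r⁻¹ * q) ^ j := by rw [mul_pow]; ring
    refine ne_top_of_le_ne_top ?_ h1
    rw [ENNReal.tsum_mul_left, ENNReal.tsum_geometric]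
    refine ENNReal.mul_ne_top hK (ENNReal.inv_ne_top.mpr ?_)
    refine (tsub_pos_of_lt ?_).ne'
    rw [mul_comm, ← div_eq_mul_inv]
    exact ENNReal.div_lt_of_lt_mul (by simpa using hqr)
  have hne : ∀ g, h g ≠ 0 := by
    intro g
    obtain ⟨m, hm⟩ := hpos g
    have := ENNReal.le_tsum (f := fun j => r⁻¹ ^ j * u j g) m
    intro h0
    have h1 : r⁻¹ ^ m * u m g ≤ 0 := this.trans (le_of_eq h0)
    exact mul_ne_zero (pow_ne_zero _ (ENNReal.inv_ne_zero.mpr hr)) hm (le_antisymm h1 zero_le)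
  have key : ∀ n g, ∑' k, h (g * k⁻¹) * u n k ≤ D * r ^ n * h g := by
    intro n g
    calc ∑' k, h (g * k⁻¹) * u n k
        = ∑' k, ∑' j, r⁻¹ ^ j * (u j (g * k⁻¹) * u n k) := by
          refine tsum_congr fun k => ?_
          rw [← ENNReal.tsum_mul_right]
          exact tsum_congr fun j => by ring
      _ = ∑' j, r⁻¹ ^ j * ∑' k, (u j (g * k⁻¹) * u n k) := by
          rw [ENNReal.tsum_comm]
          exact tsum_congr fun j => ENNReal.tsum_mul_left
      _ ≤ ∑' j, r⁻¹ ^ j * (D * u (j + n) g) := by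
          refine ENNReal.tsum_le_tsum fun j => ?_
          gcongr
          exact hmul j n g
      _ = ∑' j, D * r ^ n * (r⁻¹ ^ (j + n) * u (j + n) g) := by
          refine tsum_congr fun j => ?_
          have h1 : r ^ n * r⁻¹ ^ n = 1 := by
            rw [← mul_pow, ENNReal.mul_inv_cancel hr0 hr, one_pow]
          calc r⁻¹ ^ j * (D * u (j + n) g) = (r ^ n * r⁻¹ ^ n) * (r⁻¹ ^ j * (D * u (j + n) g)) := by
                rw [h1, one_mul]
            _ = _ := by rw [pow_add]; ring
      _ = D * r ^ n * ∑' j, (r⁻¹ ^ (j + n) * u (j + n) g) := ENNReal.tsum_mul_left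
      _ ≤ D * r ^ n * h g := by
          gcongr
          exact ENNReal.tsum_comp_le_tsum_of_injective (add_left_injective n)
            (fun j => r⁻¹ ^ j * u j g)
  have hut : ∀ n g, u n g ≠ ⊤ := by
    intro n g
    obtain ⟨K, hK, hKu⟩ := hbd g
    exact ne_top_of_le_ne_top (by finiteness) (hKu n)
  have keyR : ∀ n (K : Finset G) g, ∑ k ∈ K, (h (g * k⁻¹)).toReal * (u n k).toReal ≤
      (D * r ^ n).toReal * (h g).toReal := by
    intro n K g
    have h1 := (ENNReal.sum_le_tsum K).trans (key n g)
    have h2 := ENNReal.toReal_mono (ENNReal.mul_ne_top (by finiteness) (hfin g)) h1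
    rw [ENNReal.toReal_sum (fun k _ => ENNReal.mul_ne_top (hfin _) (hut _ _)),
      ENNReal.toReal_mul] at h2
    simpa only [ENNReal.toReal_mul] using h2
  obtain ⟨m, hadd, hsmul, hm⟩ := ham
  rw [ENNReal.tsum_eq_iSup_sum]
  refine iSup_le fun K => ?_
  have hfinal := mean_step m hadd hsmul hm (fun g => (h g).toReal)
    (fun g => ENNReal.toReal_pos (hne g) (hfin g))
    (by
      intro k
      obtain ⟨j, hj⟩ := hpos k⁻¹
      have hjp : 0 < (u j k⁻¹).toReal := ENNReal.toReal_pos hj (hut _ _)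
      refine ⟨(D * r ^ j).toReal / (u j k⁻¹).toReal, fun g => ?_⟩
      have := keyR j {k⁻¹} g
      simp only [Finset.sum_singleton, inv_inv] at this
      rw [div_mul_eq_mul_div, le_div_iff₀ hjp]
      exact this)
    (K.map (Function.Embedding.subtype _))
    (by
      intro k hk
      simp only [Finset.mem_map, Function.Embedding.subtype_apply] at hk
      obtain ⟨a, _, rfl⟩ := hk
      exact a.2)
    (fun k => (u n k).toReal) (fun k => ENNReal.toReal_nonneg) (D * r ^ n).toReal (keyR n _)
  rw [Finset.sum_map] at hfinal
  simp only [Function.Embedding.subtype_apply] at hfinal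
  rw [← ENNReal.toReal_sum (fun k _ => hut _ _)] at hfinal
  exact (ENNReal.toReal_le_toReal (ENNReal.sum_ne_top.mpr fun k _ => hut _ _) (by finiteness)).mp hfinal

end Abstract

end DS

namespace DS

open scoped ENNReal

section Concrete

variable {S : Type*} {A : S → S → Bool} {G : Type*} [Group G]

lemma shift_iter (n : ℕ) (x : Space A) (i : ℕ) : (shift^[n] x).1 i = x.1 (i + n) := by
  induction n generalizing x with
  | zero => rfl
  | succ n ih =>
    rw [Function.iterate_succ_apply, ih]
    change x.1 (i + n + 1) = _
    rw [add_assoc]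

lemma cocycle_congr {ψ : Space A → G} (hψ : TwoCoord ψ) (n : ℕ) (y z : Space A)
    (h : ∀ i ≤ n, y.1 i = z.1 i) : cocycle ψ n y = cocycle ψ n z := by
  induction n generalizing y z with
  | zero => rfl
  | succ n ih =>
    simp only [cocycle]
    rw [hψ y z (h 0 (by omega)) (h 1 (by omega)),
      ih (shift y) (shift z) (fun i hi => h (i + 1) (by omega))]

lemma cocycle_add (ψ : Space A → G) (m n : ℕ) (y : Space A) :
    cocycle ψ (m + n) y = cocycle ψ m y * cocycle ψ n (shift^[m] y) := by
  induction m generalizing y with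
  | zero => simp [cocycle]
  | succ m ih =>
    rw [Nat.succ_add]
    simp only [cocycle]
    rw [ih, mul_assoc, Function.iterate_succ_apply]

lemma cocycle_ab (ψ : Space A → G) (n : ℕ) (y : Space A) :
    cocycle (fun x => Abelianization.of (ψ x)) n y = Abelianization.of (cocycle ψ n y) := by
  induction n generalizing y with
  | zero => simp [cocycle]
  | succ n ih => simp only [cocycle, ih, map_mul]

lemma T_iter (ψ : Space A → G) (n : ℕ) (p : Space A × G) :
    (T ψ)^[n] p = (shift^[n] p.1, p.2 * cocycle ψ n p.1) := by
  induction n generalizing p with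
  | zero => simp [cocycle]
  | succ n ih => rw [Function.iterate_succ_apply, ih]; simp [T, cocycle, mul_assoc]

lemma birk_add (f : Space A → ℝ) (m n : ℕ) (y : Space A) :
    birk f (m + n) y = birk f m y + birk f n (shift^[m] y) := by
  simp only [birk, Finset.sum_range_add]
  congr 1
  refine Finset.sum_congr rfl fun j _ => ?_
  rw [← Function.iterate_add_apply, add_comm]

/-- Bounded distortion. -/
lemma distortion {f : Space A → ℝ} (hf : HolderF f) :
    ∃ C : ℝ, ∀ (n : ℕ) (y z : Space A), (∀ i < n, y.1 i = z.1 i) →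
      birk f n y ≤ C + birk f n z := by
  obtain ⟨α, hα, C, hC, h⟩ := hf
  let ρ : ℝ := 2 ^ (-α)
  have hρ0 : 0 < ρ := by positivity
  have hρ1 : ρ < 1 := Real.rpow_lt_one_of_one_lt_of_neg (by norm_num) (by linarith)
  have hpow : ∀ n : ℕ, (2 : ℝ) ^ (-(n : ℝ) * α) = ρ ^ n := by
    intro n
    simp only [ρ]
    rw [← Real.rpow_natCast, ← Real.rpow_mul (by norm_num)]
    congr 1; ring
  refine ⟨C * (1 - ρ)⁻¹, fun n y z hyz => ?_⟩
  have h1 : birk f n y - birk f n z ≤ ∑ j ∈ Finset.range n, C * ρ ^ (n - 1 - j) := by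
    simp only [birk]
    rw [← Finset.sum_sub_distrib]
    refine Finset.sum_le_sum fun j hj => ?_
    rw [Finset.mem_range] at hj
    have h2 := h (n - j) (shift^[j] y) (shift^[j] z) (fun i hi => by
      rw [shift_iter, shift_iter]; exact hyz _ (by omega))
    rw [hpow] at h2
    refine (le_abs_self _).trans (h2.trans ?_)
    refine mul_le_mul_of_nonneg_left ?_ hC
    exact pow_le_pow_of_le_one hρ0.le hρ1.le (by omega)
  rw [Finset.sum_range_reflect (fun j => C * ρ ^ j) n, ← Finset.mul_sum] at h1
  have h3 : ∑ j ∈ Finset.range n, ρ ^ j ≤ (1 - ρ)⁻¹ := by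
    rw [← tsum_geometric_of_lt_one hρ0.le hρ1]
    exact (summable_geometric_of_lt_one hρ0.le hρ1).sum_le_tsum _ (fun _ _ => by positivity)
  have := mul_le_mul_of_nonneg_left h3 hC
  linarith

/-- Concatenation of the first `m` letters of `y` with `z`. -/
def cat (m : ℕ) (y z : Space A) (h : y.1 m = z.1 0) : Space A :=
  ⟨fun i => if i < m then y.1 i else z.1 (i - m), by
    intro i
    by_cases h1 : i + 1 < m
    · simp only [h1, show i < m by omega, if_true]; exact y.2 i
    · by_cases h2 : i < m
      · have h3 : i + 1 = m := by omega
        simp only [h1, h2, if_true, if_false]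
        rw [show i + 1 - m = 0 by omega, ← h, ← h3]
        exact y.2 i
      · simp only [h1, h2, if_false]
        rw [show i + 1 - m = (i - m) + 1 by omega]
        exact z.2 _⟩

lemma cat_lt (m : ℕ) (y z : Space A) (h : y.1 m = z.1 0) (i : ℕ) (hi : i < m) :
    (cat m y z h).1 i = y.1 i := by simp [cat, hi]

lemma cat_le (m : ℕ) (y z : Space A) (h : y.1 m = z.1 0) (i : ℕ) (hi : i ≤ m) :
    (cat m y z h).1 i = y.1 i := by
  rcases hi.lt_or_eq with h1 | rfl
  · exact cat_lt _ _ _ _ _ h1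
  · simp [cat, h]

lemma cat_shift (m : ℕ) (y z : Space A) (h : y.1 m = z.1 0) :
    shift^[m] (cat m y z h) = z := by
  apply Subtype.ext
  funext i
  rw [shift_iter]
  simp [cat]

/-- A point is determined by its first `n` letters and its `n`-th shift. -/
lemma ext_shift (n : ℕ) (y z : Space A) (h : ∀ i < n, y.1 i = z.1 i)
    (hs : shift^[n] y = shift^[n] z) : y = z := by
  apply Subtype.ext
  funext i
  by_cases hi : i < n
  · exact h i hi
  · have := congrArg (fun w : Space A => w.1 (i - n)) hs
    simp only [shift_iter] at this
    rwa [show i - n + n = i by omega] at this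

lemma periodic_of {n : ℕ} {z : Space A} (h : shift^[n] z = z) : Function.Periodic z.1 n := by
  intro i
  rw [← shift_iter, h]

lemma ext_periodic {n : ℕ} (hn : 0 < n) {y z : Space A} (hy : shift^[n] y = y)
    (hz : shift^[n] z = z) (h : ∀ i < n, y.1 i = z.1 i) : y = z := by
  apply Subtype.ext
  funext i
  rw [← (periodic_of hy).map_mod_nat, ← (periodic_of hz).map_mod_nat]
  exact h _ (Nat.mod_lt _ hn)

/-- Periodization of the first `n` letters. -/
def per (n : ℕ) (hn : 0 < n) (y : Space A) (h : y.1 n = y.1 0) : Space A :=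
  ⟨fun i => y.1 (i % n), by
    intro i
    have hlt := Nat.mod_lt i hn
    have h0 := y.2 (i % n)
    change A (y.1 (i % n)) (y.1 ((i + 1) % n)) = true
    by_cases h1 : i % n + 1 < n
    · rw [Nat.add_mod_eq_ite]
      by_cases hn1 : n = 1
      · omega
      · rw [Nat.mod_eq_of_lt (show 1 < n by omega), if_neg (by omega)]
        exact h0
    · have h2 : i % n + 1 = n := by omega
      have h3 : (i + 1) % n = 0 := by
        rw [Nat.add_mod_eq_ite] at *
        by_cases hn1 : n = 1
        · subst hn1; simp [Nat.mod_one]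
        · rw [Nat.mod_eq_of_lt (show 1 < n by omega), if_pos (by omega)]
          omega
      rw [h2, h] at h0
      rw [h3]
      exact h0⟩

lemma per_lt (n : ℕ) (hn : 0 < n) (y : Space A) (h : y.1 n = y.1 0) (i : ℕ) (hi : i < n) :
    (per n hn y h).1 i = y.1 i := by simp [per, Nat.mod_eq_of_lt hi]

lemma per_le (n : ℕ) (hn : 0 < n) (y : Space A) (h : y.1 n = y.1 0) (i : ℕ) (hi : i ≤ n) :
    (per n hn y h).1 i = y.1 i := by
  rcases hi.lt_or_eq with h1 | rfl
  · exact per_lt _ _ _ _ _ h1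
  · simp [per, h]

lemma per_shift (n : ℕ) (hn : 0 < n) (y : Space A) (h : y.1 n = y.1 0) :
    shift^[n] (per n hn y h) = per n hn y h := by
  apply Subtype.ext
  funext i
  rw [shift_iter]
  simp [per]

lemma tsum_le_of_inj {α β : Type*} (φ : α → β) (hφ : Function.Injective φ) (a : α → ℝ≥0∞)
    (b : β → ℝ≥0∞) (c : ℝ≥0∞) (h : ∀ i, a i ≤ c * b (φ i)) : ∑' i, a i ≤ c * ∑' j, b j := by
  calc ∑' i, a i ≤ ∑' i, c * b (φ i) := ENNReal.tsum_le_tsum h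
    _ = c * ∑' i, b (φ i) := ENNReal.tsum_mul_left
    _ ≤ c * ∑' j, b j := by
      gcongr
      exact ENNReal.tsum_comp_le_tsum_of_injective hφ b

/-- Loops at `x 0` of length `n` with cocycle value `g`, completed by `x`. -/
def Lp (ψ : Space A → G) (x : Space A) (n : ℕ) (g : G) : Type _ :=
  {y : Space A // shift^[n] y = x ∧ y.1 0 = x.1 0 ∧ cocycle ψ n y = g}

/-- The exponential weight. -/
noncomputable def wt (f : Space A → ℝ) (n : ℕ) (y : Space A) : ℝ≥0∞ :=
  ENNReal.ofReal (Real.exp (birk f n y))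

/-- Weighted number of loops. -/
noncomputable def uu (ψ : Space A → G) (f : Space A → ℝ) (x : Space A) (n : ℕ) (g : G) : ℝ≥0∞ :=
  ∑' y : Lp ψ x n g, wt f n y.1

/-- Weighted number of periodic points. -/
noncomputable def ZE (ψ : Space A → G) (f : Space A → ℝ) (n : ℕ) : ℝ≥0∞ :=
  ∑' z : {z : Space A // shift^[n] z = z ∧ cocycle ψ n z = 1}, wt f n z.1

lemma wt_pos (f : Space A → ℝ) (n : ℕ) (y : Space A) : 0 < wt f n y :=
  ENNReal.ofReal_pos.mpr (Real.exp_pos _)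

lemma wt_le {f : Space A → ℝ} {C : ℝ} {n : ℕ} {y z : Space A}
    (h : birk f n y ≤ C + birk f n z) : wt f n y ≤ ENNReal.ofReal (Real.exp C) * wt f n z := by
  rw [wt, wt, ← ENNReal.ofReal_mul (Real.exp_pos _).le, ← Real.exp_add]
  exact ENNReal.ofReal_le_ofReal (Real.exp_le_exp.mpr h)

lemma wt_add (f : Space A → ℝ) (m n : ℕ) (y : Space A) :
    wt f (m + n) y = wt f m y * wt f n (shift^[m] y) := by
  rw [wt, wt, wt, birk_add, Real.exp_add, ENNReal.ofReal_mul (Real.exp_pos _).le]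

lemma lp_last {ψ : Space A → G} {x : Space A} {n : ℕ} {g : G} (y : Lp ψ x n g) :
    y.1.1 n = x.1 0 := by
  have h := shift_iter n y.1 0
  rw [y.2.1] at h
  simpa using h.symm

lemma uu_mul {ψ : Space A → G} (hψ : TwoCoord ψ) (f : Space A → ℝ) (C : ℝ)
    (hC : ∀ (n : ℕ) (y z : Space A), (∀ i < n, y.1 i = z.1 i) → birk f n y ≤ C + birk f n z)
    (x : Space A) (m n : ℕ) (g : G) :
    ∑' k, uu ψ f x m (g * k⁻¹) * uu ψ f x n k ≤
      ENNReal.ofReal (Real.exp C) * uu ψ f x (m + n) g := by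
  have h1 : ∑' k, uu ψ f x m (g * k⁻¹) * uu ψ f x n k =
      ∑' p : (Σ k : G, Lp ψ x m (g * k⁻¹) × Lp ψ x n k), wt f m p.2.1.1 * wt f n p.2.2.1 := by
    rw [ENNReal.tsum_sigma (fun (k : G) (q : Lp ψ x m (g * k⁻¹) × Lp ψ x n k) =>
      wt f m q.1.1 * wt f n q.2.1)]
    refine tsum_congr fun k => ?_
    rw [ENNReal.tsum_prod (f := fun (y : Lp ψ x m (g * k⁻¹)) (z : Lp ψ x n k) =>
      wt f m y.1 * wt f n z.1)]
    simp only [uu]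
    rw [← ENNReal.tsum_mul_right]
    exact tsum_congr fun y => ENNReal.tsum_mul_left.symm
  rw [h1]
  have hj : ∀ {k : G} (q : Lp ψ x m (g * k⁻¹) × Lp ψ x n k), q.1.1.1 m = q.2.1.1 0 :=
    fun q => (lp_last q.1).trans q.2.2.2.1.symm
  refine tsum_le_of_inj (fun p : (Σ k : G, Lp ψ x m (g * k⁻¹) × Lp ψ x n k) =>
    (⟨cat m p.2.1.1 p.2.2.1 (hj p.2), ?_, ?_, ?_⟩ : Lp ψ x (m + n) g)) ?_ _ _ _ ?_
  · rw [add_comm m n, Function.iterate_add_apply, cat_shift]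
    exact p.2.2.2.1
  · rw [cat_le _ _ _ _ _ (Nat.zero_le _)]
    exact p.2.1.2.2.1
  · rw [cocycle_add, cat_shift, cocycle_congr hψ m _ p.2.1.1 (cat_le _ _ _ _),
      p.2.1.2.2.2, p.2.2.2.2.2]
    simp
  · rintro ⟨k, y, z⟩ ⟨k', y', z'⟩ h
    have h2 : cat m y.1 z.1 (hj (y, z)) = cat m y'.1 z'.1 (hj (y', z')) := congrArg Subtype.val h
    have h3 : z.1 = z'.1 := by
      have := congrArg (fun w => shift^[m] w) h2
      simpa only [cat_shift] using this
    have h4 : y.1 = y'.1 := by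
      apply ext_shift m
      · intro i hi
        have := congrArg (fun w : Space A => w.1 i) h2
        simpa only [cat_lt _ _ _ _ _ hi] using this
      · rw [y.2.1, y'.2.1]
    have h5 : k = k' := by
      rw [← z.2.2.2, ← z'.2.2.2, h3]
    subst h5
    have h6 : y = y' := Subtype.ext h4
    have h7 : z = z' := Subtype.ext h3
    rw [h6, h7]
  · rintro ⟨k, y, z⟩
    simp only
    rw [wt_add, cat_shift, ← mul_assoc]
    gcongr
    exact wt_le (hC m _ _ fun i hi => (cat_lt _ _ _ _ _ hi).symm)

lemma uu_ne_zero {ψ : Space A → G} {f : Space A → ℝ} {x : Space A} {n : ℕ} {g : G}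
    (y : Lp ψ x n g) : uu ψ f x n g ≠ 0 :=
  ((wt_pos f n y.1).trans_le (ENNReal.le_tsum (f := fun y : Lp ψ x n g => wt f n y.1) y)).ne'

lemma uu_pos {ψ : Space A → G} (hψ : TwoCoord ψ) (ht : TransitiveExt ψ) (f : Space A → ℝ)
    (x : Space A) (g : G) : ∃ n, uu ψ f x n g ≠ 0 := by
  obtain ⟨⟨p, g0⟩, hp⟩ := ht
  choose τ hτ using fun h => hp 1 x h
  simp only [T_iter] at hτ
  have hex : ∃ h, τ h ≤ τ (h * g) := by
    by_contra hcon
    push Not at hcon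
    have h1 : ∀ j : ℕ, τ (g ^ j) + j ≤ τ 1 := by
      intro j
      induction j with
      | zero => simp
      | succ j ih =>
        have := hcon (g ^ j)
        rw [← pow_succ] at this
        omega
    have := h1 (τ 1 + 1)
    omega
  obtain ⟨h, hle⟩ := hex
  obtain ⟨n, hn⟩ := Nat.exists_eq_add_of_le hle
  have ha := hτ h
  have hb := hτ (h * g)
  have ha0 := ha.1 0 (by omega)
  have hb0 := hb.1 0 (by omega)
  rw [hn] at hb hb0
  rw [add_comm (τ h) n, Function.iterate_add_apply] at hb0
  set w := shift^[τ h] p with hw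
  have hwn : w.1 n = x.1 0 := by
    rw [shift_iter] at hb0
    simpa using hb0
  have hc : cocycle ψ n w = g := by
    have h2 := hb.2
    rw [cocycle_add, ← mul_assoc, ha.2] at h2
    exact mul_left_cancel h2
  refine ⟨n, uu_ne_zero ⟨cat n w x hwn, cat_shift _ _ _ _, ?_, ?_⟩⟩
  · rw [cat_le _ _ _ _ _ (Nat.zero_le _)]; exact ha0
  · rw [cocycle_congr hψ n _ w (cat_le _ _ _ _), hc]

lemma uu_one_le {ψ : Space A → G} (hψ : TwoCoord ψ) (f : Space A → ℝ) (C : ℝ)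
    (hC : ∀ (n : ℕ) (y z : Space A), (∀ i < n, y.1 i = z.1 i) → birk f n y ≤ C + birk f n z)
    (x : Space A) (n : ℕ) (hn : 0 < n) :
    uu ψ f x n 1 ≤ ENNReal.ofReal (Real.exp C) * ZE ψ f n := by
  have hj : ∀ y : Lp ψ x n 1, y.1.1 n = y.1.1 0 := fun y => (lp_last y).trans y.2.2.1.symm
  refine tsum_le_of_inj (fun y : Lp ψ x n 1 => (⟨per n hn y.1 (hj y), per_shift _ _ _ _, ?_⟩ :
    {z : Space A // shift^[n] z = z ∧ cocycle ψ n z = 1})) ?_ _ _ _ ?_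
  · rw [cocycle_congr hψ n _ y.1 (per_le _ _ _ _)]
    exact y.2.2.2
  · intro y y' h
    have h2 : per n hn y.1 (hj y) = per n hn y'.1 (hj y') := congrArg Subtype.val h
    apply Subtype.ext
    apply ext_shift n
    · intro i hi
      have := congrArg (fun w : Space A => w.1 i) h2
      simpa only [per_lt _ _ _ _ _ hi] using this
    · rw [y.2.1, y'.2.1]
  · intro y
    exact wt_le (hC n _ _ fun i hi => (per_lt n hn y.1 (hj y) i hi).symm)

lemma ZE_ab_le {ψ : Space A → G} (hψ : TwoCoord ψ) (f : Space A → ℝ) (C : ℝ)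
    (hC : ∀ (n : ℕ) (y z : Space A), (∀ i < n, y.1 i = z.1 i) → birk f n y ≤ C + birk f n z)
    (pt : S → Space A) (hpt : ∀ b, (pt b).1 0 = b) (n : ℕ) (hn : 0 < n) :
    ZE (fun x => Abelianization.of (ψ x)) f n ≤ ENNReal.ofReal (Real.exp C) *
      ∑' b : S, ∑' k : {k : G // Abelianization.of k = 1}, uu ψ f (pt b) n k := by
  have h1 : ∑' b : S, ∑' k : {k : G // Abelianization.of k = 1}, uu ψ f (pt b) n k =
      ∑' p : (Σ b : S, Σ k : {k : G // Abelianization.of k = 1}, Lp ψ (pt b) n k.1),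
        wt f n p.2.2.1 := by
    rw [ENNReal.tsum_sigma (fun (b : S)
      (q : Σ k : {k : G // Abelianization.of k = 1}, Lp ψ (pt b) n k.1) => wt f n q.2.1)]
    refine tsum_congr fun b => ?_
    rw [ENNReal.tsum_sigma (fun (k : {k : G // Abelianization.of k = 1})
      (q : Lp ψ (pt b) n k.1) => wt f n q.1)]
    rfl
  rw [h1]
  have hj : ∀ z : {z : Space A // shift^[n] z = z ∧
      cocycle (fun x => Abelianization.of (ψ x)) n z = 1}, z.1.1 n = (pt (z.1.1 0)).1 0 := by
    intro z
    rw [hpt]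
    simpa using periodic_of z.2.1 0
  refine tsum_le_of_inj (fun z : {z : Space A // shift^[n] z = z ∧
      cocycle (fun x => Abelianization.of (ψ x)) n z = 1} =>
      (⟨z.1.1 0, ⟨cocycle ψ n z.1, ?_⟩, ⟨cat n z.1 (pt (z.1.1 0)) (hj z),
        cat_shift _ _ _ _, ?_, ?_⟩⟩ :
        (Σ b : S, Σ k : {k : G // Abelianization.of k = 1}, Lp ψ (pt b) n k.1))) ?_ _ _ _ ?_
  · rw [← cocycle_ab]; exact z.2.2
  · rw [cat_le _ _ _ _ _ (Nat.zero_le _), hpt]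
  · exact cocycle_congr hψ n _ z.1 (cat_le _ _ _ _)
  · intro z z' h
    have h2 : cat n z.1 _ (hj z) = cat n z'.1 _ (hj z') := congrArg
      (fun p : (Σ b : S, Σ k : {k : G // Abelianization.of k = 1}, Lp ψ (pt b) n k.1) =>
        p.2.2.1) h
    apply Subtype.ext
    apply ext_periodic hn z.2.1 z'.2.1
    intro i hi
    have := congrArg (fun w : Space A => w.1 i) h2
    simpa only [cat_lt _ _ _ _ _ hi] using this
  · intro z
    exact wt_le (hC n _ _ fun i hi => (cat_lt n z.1 _ (hj z) i hi).symm)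

lemma exists_pt [Nonempty S] (hA : Aperiodic A) : ∃ pt : S → Space A, ∀ b, (pt b).1 0 = b := by
  obtain ⟨N, hN, h⟩ := hA
  have hs : ∀ i : S, ∃ j, A i j = true := by
    intro i
    obtain ⟨w, h0, _, hw⟩ := h i i
    exact ⟨w 1, by rw [← h0]; exact hw 0 hN⟩
  choose s hs using hs
  refine ⟨fun b => ⟨fun n => s^[n] b, fun n => ?_⟩, fun b => rfl⟩
  change A (s^[n] b) (s^[n + 1] b) = true
  rw [Function.iterate_succ_apply']
  exact hs _

lemma uu_zero_ne_top (ψ : Space A → G) (f : Space A → ℝ) (x : Space A) :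
    uu ψ f x 0 1 ≠ ⊤ := by
  have : Subsingleton (Lp ψ x 0 1) := ⟨fun y z => Subtype.ext (y.2.1.trans z.2.1.symm)⟩
  have : Finite (Lp ψ x 0 1) := inferInstance
  have := Fintype.ofFinite (Lp ψ x 0 1)
  rw [uu, tsum_fintype]
  exact ENNReal.sum_ne_top.mpr fun _ _ => ENNReal.ofReal_ne_top

section Fin

variable [Fintype S]

/-- The set of periodic points injects into words. -/
lemma per_inj (ψ : Space A → G) (n : ℕ) (hn : 0 < n) :
    Function.Injective (fun (z : {z : Space A // shift^[n] z = z ∧ cocycle ψ n z = 1})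
      (i : Fin n) => z.1.1 i) := by
  intro z z' h
  apply Subtype.ext
  apply ext_periodic hn z.2.1 z'.2.1
  intro i hi
  exact congrFun h ⟨i, hi⟩

lemma per_finite (ψ : Space A → G) (n : ℕ) (hn : 0 < n) :
    Finite {z : Space A // shift^[n] z = z ∧ cocycle ψ n z = 1} :=
  Finite.of_injective _ (per_inj ψ n hn)

/-- The real partition function. -/
noncomputable def ZR (ψ : Space A → G) (f : Space A → ℝ) (n : ℕ) : ℝ :=
  ∑' x : {x : Space A // shift^[n] x = x ∧ cocycle ψ n x = 1}, Real.exp (birk f n x.1)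

lemma ZE_eq (ψ : Space A → G) (f : Space A → ℝ) (n : ℕ) (hn : 0 < n) :
    ZE ψ f n = ENNReal.ofReal (ZR ψ f n) := by
  have := per_finite ψ n hn
  rw [ZR, ENNReal.ofReal_tsum_of_nonneg (fun _ => (Real.exp_pos _).le) Summable.of_finite]
  rfl

lemma ZR_nonneg (ψ : Space A → G) (f : Space A → ℝ) (n : ℕ) : 0 ≤ ZR ψ f n :=
  tsum_nonneg fun _ => (Real.exp_pos _).le

lemma ZR_pos (ψ : Space A → G) (f : Space A → ℝ) (n : ℕ) (hn : 0 < n)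
    (h : Nonempty {x : Space A // shift^[n] x = x ∧ cocycle ψ n x = 1}) : 0 < ZR ψ f n := by
  have := per_finite ψ n hn
  obtain ⟨z⟩ := h
  exact Summable.tsum_pos Summable.of_finite (fun _ => (Real.exp_pos _).le) z (Real.exp_pos _)

lemma ZR_le_ab (ψ : Space A → G) (f : Space A → ℝ) (n : ℕ) (hn : 0 < n) :
    ZR ψ f n ≤ ZR (fun x => Abelianization.of (ψ x)) f n := by
  have h : ZE ψ f n ≤ 1 * ZE (fun x => Abelianization.of (ψ x)) f n := by
    refine tsum_le_of_inj (fun z : {z : Space A // shift^[n] z = z ∧ cocycle ψ n z = 1} =>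
      (⟨z.1, z.2.1, by rw [cocycle_ab, z.2.2, map_one]⟩ : {z : Space A // shift^[n] z = z ∧
        cocycle (fun x => Abelianization.of (ψ x)) n z = 1})) ?_ _ _ _ ?_
    · intro z z' h
      have h2 : z.1 = z'.1 := (Subtype.mk.injEq _ _ _ _).mp h
      exact Subtype.ext h2
    · intro z
      rw [one_mul]
  rw [one_mul, ZE_eq _ _ _ hn, ZE_eq _ _ _ hn] at h
  exact (ENNReal.ofReal_le_ofReal_iff (ZR_nonneg _ _ _)).mp h

lemma birk_abs (f : Space A → ℝ) (K : ℝ) (hK : ∀ x, |f x| ≤ K) (n : ℕ) (x : Space A) :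
    |birk f n x| ≤ n * K := by
  refine (Finset.abs_sum_le_sum_abs _ _).trans ?_
  refine (Finset.sum_le_sum fun j _ => hK _).trans ?_
  simp

lemma f_bdd [Nonempty (Space A)] {f : Space A → ℝ} (hf : HolderF f) : ∃ K, 0 ≤ K ∧ ∀ x, |f x| ≤ K := by
  obtain ⟨α, hα, C, hC, h⟩ := hf
  obtain ⟨x0⟩ := ‹Nonempty (Space A)›
  refine ⟨|f x0| + C, by positivity, fun x => ?_⟩
  have := h 0 x x0 (by simp)
  simp only [Nat.cast_zero, neg_zero, zero_mul, Real.rpow_zero, mul_one] at this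
  have h2 := abs_sub_abs_le_abs_sub (f x) (f x0)
  linarith

lemma a_bdd [Nonempty (Space A)] [Nonempty S] (ψ : Space A → G) {f : Space A → ℝ} (hf : HolderF f) :
    ∃ M : ℝ, ∀ n > 0, |Real.log (ZR ψ f n) / n| ≤ M := by
  obtain ⟨K, hK0, hK⟩ := f_bdd hf
  have hS1 : (1 : ℝ) ≤ Fintype.card S := by exact_mod_cast Fintype.card_pos
  have hlogS : 0 ≤ Real.log (Fintype.card S) := Real.log_nonneg hS1
  refine ⟨K + Real.log (Fintype.card S), fun n hn => ?_⟩
  have hn' : (0 : ℝ) < n := by exact_mod_cast hn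
  rcases isEmpty_or_nonempty {x : Space A // shift^[n] x = x ∧ cocycle ψ n x = 1} with he | hne
  · rw [ZR, tsum_empty, Real.log_zero, zero_div, abs_zero]
    positivity
  have hpos := ZR_pos ψ f n hn hne
  rw [abs_div, abs_of_pos hn', div_le_iff₀ hn', abs_le]
  have := per_finite ψ n hn
  have := Fintype.ofFinite {x : Space A // shift^[n] x = x ∧ cocycle ψ n x = 1}
  constructor
  · have h1 : Real.exp (-(n * K)) ≤ ZR ψ f n := by
      obtain ⟨z⟩ := hne
      refine le_trans ?_ ((Summable.of_finite (f := fun x : {x : Space A //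
        shift^[n] x = x ∧ cocycle ψ n x = 1} => Real.exp (birk f n x.1))).le_tsum z
        (fun _ _ => (Real.exp_pos _).le))
      exact Real.exp_le_exp.mpr (abs_le.mp (birk_abs f K hK n z.1)).1
    have h2 := Real.log_le_log (Real.exp_pos _) h1
    rw [Real.log_exp] at h2
    nlinarith
  · have h1 : ZR ψ f n ≤ (Fintype.card S : ℝ) ^ n * Real.exp (n * K) := by
      rw [ZR, tsum_fintype]
      refine (Finset.sum_le_card_nsmul _ _ (Real.exp (n * K)) fun z _ =>
        Real.exp_le_exp.mpr (abs_le.mp (birk_abs f K hK n z.1)).2).trans ?_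
      rw [nsmul_eq_mul]
      gcongr
      have h3 := Fintype.card_le_of_injective _ (per_inj ψ n hn)
      rw [Fintype.card_fun, Fintype.card_fin] at h3
      exact_mod_cast h3
    have h2 := Real.log_le_log hpos h1
    rw [Real.log_mul (by positivity) (Real.exp_pos _).ne', Real.log_exp, Real.log_pow] at h2
    linarith

/-- For large `n`, the two partition functions vanish simultaneously. -/
lemma ZR_pos_of_ab {ψ : Space A → G} (hψ : TwoCoord ψ) (ht : TransitiveExt ψ)
    {f : Space A → ℝ} (hf : HolderF f) (pt : S → Space A) (hpt : ∀ b, (pt b).1 0 = b) :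
    ∃ N, ∀ n ≥ N, ZR (fun x => Abelianization.of (ψ x)) f n ≠ 0 → 0 < ZR ψ f n := by
  obtain ⟨C, hC⟩ := distortion hf
  choose N hN using fun b => abs_period (uu ψ f (pt b)) _ (uu_mul hψ f C hC (pt b))
    (uu_pos hψ ht f (pt b))
  refine ⟨∑ b, N b + 1, fun n hn h0 => ?_⟩
  have hn0 : 0 < n := by omega
  have h1 : ZE (fun x => Abelianization.of (ψ x)) f n ≠ 0 := by
    rw [ZE_eq _ _ _ hn0]
    exact (ENNReal.ofReal_pos.mpr (lt_of_le_of_ne (ZR_nonneg _ _ _) h0.symm)).ne'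
  have h2 := ZE_ab_le hψ f C hC pt hpt n hn0
  have h3 : ∑' b : S, ∑' k : {k : G // Abelianization.of k = 1}, uu ψ f (pt b) n k ≠ 0 := by
    intro h
    rw [h, mul_zero] at h2
    exact h1 (le_antisymm h2 zero_le)
  simp only [ne_eq, ENNReal.tsum_eq_zero, not_forall] at h3
  obtain ⟨b, ⟨k, hk⟩, hb⟩ := h3
  have h4 := hN b n (by
    have := Finset.single_le_sum (f := N) (fun _ _ => Nat.zero_le _) (Finset.mem_univ b)
    omega) k hk hb
  have h5 := uu_one_le hψ f C hC (pt b) n hn0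
  rw [ZE_eq _ _ _ hn0] at h5
  by_contra hcon
  rw [ENNReal.ofReal_of_nonpos (not_lt.mp hcon), mul_zero] at h5
  exact h4 (le_antisymm h5 zero_le)

/-- The main growth estimate. -/
lemma ZR_growth {ψ : Space A → G} (hψ : TwoCoord ψ) (ht : TransitiveExt ψ) (ham : Amenable G)
    {f : Space A → ℝ} (hf : HolderF f) (pt : S → Space A) (hpt : ∀ b, (pt b).1 0 = b)
    (t s : ℝ) (hts : t < s) (N : ℕ) (hN : ∀ n ≥ N, ZR ψ f n ≤ Real.exp t ^ n) :
    ∃ D : ℝ, 0 < D ∧ ∀ n > 0, ZR (fun x => Abelianization.of (ψ x)) f n ≤ D * Real.exp s ^ n := by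
  obtain ⟨C, hC⟩ := distortion hf
  set c : ℝ≥0∞ := ENNReal.ofReal (Real.exp C) with hc
  have hct : c ≠ ⊤ := ENNReal.ofReal_ne_top
  set q : ℝ≥0∞ := ENNReal.ofReal (Real.exp t) with hq
  set r : ℝ≥0∞ := ENNReal.ofReal (Real.exp s) with hr
  have hqt : q ≠ ⊤ := ENNReal.ofReal_ne_top
  have hrt : r ≠ ⊤ := ENNReal.ofReal_ne_top
  have hq0 : q ≠ 0 := (ENNReal.ofReal_pos.mpr (Real.exp_pos _)).ne'
  have hqr : q < r := (ENNReal.ofReal_lt_ofReal_iff (Real.exp_pos _)).mpr (Real.exp_lt_exp.mpr hts)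
  have hut : ∀ b n, uu ψ f (pt b) n 1 ≠ ⊤ := by
    intro b n
    rcases Nat.eq_zero_or_pos n with rfl | hn
    · exact uu_zero_ne_top _ _ _
    · refine ne_top_of_le_ne_top ?_ (uu_one_le hψ f C hC (pt b) n hn)
      rw [ZE_eq _ _ _ hn]
      exact ENNReal.mul_ne_top hct ENNReal.ofReal_ne_top
  have hb : ∀ b n, ∑' k : {k : G // Abelianization.of k = 1}, uu ψ f (pt b) n k ≤ c * r ^ n := by
    intro b n
    refine abs_main ham (uu ψ f (pt b)) c hct (uu_mul hψ f C hC (pt b)) (uu_pos hψ ht f (pt b))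
      (c + ∑ j ∈ Finset.range (N + 1), uu ψ f (pt b) j 1 / q ^ j) q r ?_ hqr hrt ?_ n
    · refine ENNReal.add_ne_top.mpr ⟨hct, ENNReal.sum_ne_top.mpr fun j _ => ?_⟩
      exact ENNReal.div_ne_top (hut b j) (pow_ne_zero _ hq0)
    · intro n
      by_cases hn : n < N + 1
      · have h1 : uu ψ f (pt b) n 1 = uu ψ f (pt b) n 1 / q ^ n * q ^ n :=
          (ENNReal.div_mul_cancel (pow_ne_zero _ hq0) (ENNReal.pow_ne_top hqt)).symm
        rw [h1]
        gcongr
        refine le_trans ?_ le_add_self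
        exact Finset.single_le_sum (f := fun j => uu ψ f (pt b) j 1 / q ^ j)
          (fun _ _ => zero_le) (Finset.mem_range.mpr hn)
      · refine (uu_one_le hψ f C hC (pt b) n (by omega)).trans ?_
        gcongr
        · exact le_self_add
        · rw [ZE_eq _ _ _ (by omega), hq, ← ENNReal.ofReal_pow (Real.exp_pos _).le]
          exact ENNReal.ofReal_le_ofReal (hN n (by omega))
  refine ⟨Real.exp C * (Fintype.card S * Real.exp C) + 1, by positivity, fun n hn => ?_⟩
  have h1 := ZE_ab_le hψ f C hC pt hpt n hn
  have h2 : ∑' b : S, ∑' k : {k : G // Abelianization.of k = 1}, uu ψ f (pt b) n k ≤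
      Fintype.card S * (c * r ^ n) := by
    rw [tsum_fintype]
    refine (Finset.sum_le_card_nsmul _ _ (c * r ^ n) fun b _ => hb b n).trans ?_
    rw [nsmul_eq_mul]; rfl
  have h3 : ZE (fun x => Abelianization.of (ψ x)) f n ≤ c * (Fintype.card S * (c * r ^ n)) :=
    h1.trans (by gcongr)
  have h4 : c * (Fintype.card S * (c * r ^ n)) =
      ENNReal.ofReal (Real.exp C * (Fintype.card S * (Real.exp C * Real.exp s ^ n))) := by
    rw [ENNReal.ofReal_mul (by positivity), ENNReal.ofReal_mul (by positivity),
      ENNReal.ofReal_mul (by positivity), ENNReal.ofReal_natCast, ENNReal.ofReal_pow (by positivity)]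
  rw [ZE_eq _ _ _ hn, h4] at h3
  have h5 := (ENNReal.ofReal_le_ofReal_iff (by positivity)).mp h3
  have h6 : 0 < Real.exp s ^ n := by positivity
  nlinarith

end Fin

end Concrete

end DS

/-- If `T_ψ` is transitive, `f` is Hölder continuous and `G` is amenable,
then `P_Gur(f,T_ψ) = P_Gur(f,T_{ψ^{ab}})`. -/
theorem statement4
    {S : Type*} [Fintype S] {A : S → S → Bool} (hA : Aperiodic A)
    {G : Type*} [Group G] [Countable G]
    (ψ : Space A → G) (hψ : TwoCoord ψ) (htrans : TransitiveExt ψ)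
    (f : Space A → ℝ) (hf : HolderF f) (ham : Amenable G) :
    PGur ψ f = PGur (fun x => Abelianization.of (ψ x)) f := by
  have hSp : Nonempty (Space A) := ⟨htrans.choose.1⟩
  have hS : Nonempty S := ⟨hSp.some.1 0⟩
  obtain ⟨pt, hpt⟩ := exists_pt hA
  obtain ⟨M, hM⟩ := a_bdd ψ hf
  obtain ⟨M', hM'⟩ := a_bdd (fun x => Abelianization.of (ψ x)) hf
  obtain ⟨N0, hN0⟩ := ZR_pos_of_ab hψ htrans hf pt hpt
  set Z : ℕ → ℝ := ZR ψ f with hZ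
  set Z' : ℕ → ℝ := ZR (fun x => Abelianization.of (ψ x)) f with hZ'
  have hle : ∀ n > 0, Z n ≤ Z' n := ZR_le_ab ψ f
  change Filter.atTop.limsup (fun n : ℕ => Real.log (Z n) / n) =
    Filter.atTop.limsup (fun n : ℕ => Real.log (Z' n) / n)
  have hub : ∀ (a : ℕ → ℝ) (M : ℝ), (∀ n > 0, |a n| ≤ M) →
      IsBoundedUnder (· ≤ ·) atTop a ∧ IsCoboundedUnder (· ≤ ·) atTop a := by
    intro a M h
    refine ⟨⟨M, ?_⟩, ?_⟩
    · rw [eventually_map]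
      filter_upwards [eventually_gt_atTop 0] with n hn using (abs_le.mp (h n hn)).2
    · refine IsBoundedUnder.isCoboundedUnder_le ⟨-M, ?_⟩
      rw [eventually_map]
      filter_upwards [eventually_gt_atTop 0] with n hn using (abs_le.mp (h n hn)).1
  obtain ⟨hb, hcb⟩ := hub _ M hM
  obtain ⟨hb', hcb'⟩ := hub _ M' hM'
  have hZ0 : ∀ n, 0 ≤ Z n := ZR_nonneg ψ f
  have hZ0' : ∀ n, 0 ≤ Z' n := ZR_nonneg _ f
  apply le_antisymm
  · refine limsup_le_limsup ?_ hcb hb'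
    filter_upwards [eventually_gt_atTop 0, eventually_ge_atTop N0] with n hn hn0
    by_cases h : Z' n = 0
    · have : Z n = 0 := le_antisymm (h ▸ hle n hn) (hZ0 n)
      rw [h, this]
    · have hp := hN0 n hn0 h
      have := Real.log_le_log hp (hle n hn)
      gcongr
  · refine le_of_forall_gt_imp_ge_of_dense fun e he => ?_
    obtain ⟨s, hs1, hs2⟩ := exists_between he
    obtain ⟨t, ht1, ht2⟩ := exists_between hs1
    have hev := eventually_lt_of_limsup_lt ht1 hb
    have hev2 : ∀ᶠ n : ℕ in atTop, Z n ≤ Real.exp t ^ n := by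
      filter_upwards [hev, eventually_gt_atTop 0] with n h hn
      have hn' : (0 : ℝ) < n := by exact_mod_cast hn
      rcases (hZ0 n).eq_or_lt with h0 | h0
      · rw [← h0]; positivity
      · rw [div_lt_iff₀ hn'] at h
        rw [← Real.exp_nat_mul, ← Real.log_le_iff_le_exp h0]
        linarith
    obtain ⟨N, hN⟩ := eventually_atTop.mp hev2
    obtain ⟨D, hD, hDb⟩ := ZR_growth hψ htrans ham hf pt hpt t s ht2 N hN
    have htend : Tendsto (fun n : ℕ => Real.log D / n) atTop (nhds 0) :=
      tendsto_const_div_atTop_nhds_zero_nat _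
    refine limsup_le_of_le hcb' ?_
    filter_upwards [hev, eventually_gt_atTop 0,
      htend.eventually (gt_mem_nhds (show (0 : ℝ) < e - s by linarith))] with n h hn hn2
    have hn' : (0 : ℝ) < n := by exact_mod_cast hn
    rcases (hZ0' n).eq_or_lt with h0 | h0
    · have : Z n = 0 := le_antisymm (h0 ▸ hle n hn) (hZ0 n)
      rw [this] at h
      rw [← h0]
      linarith
    · have h1 := Real.log_le_log h0 (hDb n hn)
      rw [Real.log_mul hD.ne' (by positivity), Real.log_pow, Real.log_exp] at h1
      have h2 : Real.log (Z' n) / n ≤ (Real.log D + n * s) / n := by gcongr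
      rw [add_div, mul_div_cancel_left₀ _ hn'.ne'] at h2
      linarith
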